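/- Let μ be a probability measure on ℝ satisfying Condition A and invariant under the reflection R_θ(x) = 2θ − x, with distribution function F. Then L(θ'; F) ≤ L(θ; F) for every θ' ∈ ℝ, with strict inequality whenever θ' ≠ θ; hence θ is the unique maximizer of θ' ↦ L(θ'; F) (Condition B holds with θ*(F) = θ). -/

import Mathlib

open MeasureTheory Filter Set
open scoped ENNReal NNReal

noncomputable section

/-- `exp` of an extended real number, valued in `ℝ≥0∞`. -/
def expE (y : EReal) : ℝ≥0∞ :=
  if y = ⊥ then 0 else if y = ⊤ then ⊤ else ENNReal.ofReal (Real.exp y.toReal)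

/-- Truncation of an extended real number to `ℝ≥0∞` (negative values go to `0`). -/
def toENN (y : EReal) : ℝ≥0∞ :=
  if y = ⊤ then ⊤ else ENNReal.ofReal y.toReal

/-- Signed (upper-minus-lower) integral of an `EReal`-valued function against a measure. -/
def eIntegral (μ : Measure ℝ) (ψ : ℝ → EReal) : EReal :=
  ((∫⁻ x, toENN (ψ x) ∂μ : ℝ≥0∞) : EReal) - ((∫⁻ x, toENN (-(ψ x)) ∂μ : ℝ≥0∞) : EReal)

/-- Concavity for `EReal`-valued functions on `ℝ`. -/
def EConcave (ψ : ℝ → EReal) : Prop :=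
  ∀ x y : ℝ, ∀ t : ℝ, 0 ≤ t → t ≤ 1 →
    ((t : EReal) * ψ x + (((1 - t) : ℝ) : EReal) * ψ y) ≤ ψ (t * x + (1 - t) * y)

/-- The class `SC₀` of proper, closed (upper semicontinuous), concave functions
`ℝ → [−∞, ∞)` that are symmetric about `0`. -/
def memSC0 (ψ : ℝ → EReal) : Prop :=
  (∀ x, ψ x < ⊤) ∧ (∃ x, ψ x ≠ ⊥) ∧ UpperSemicontinuous ψ ∧ EConcave ψ ∧ ∀ x, ψ (-x) = ψ x

/-- The criterion function `Ψ(θ, ψ, F) = ∫ ψ(x − θ) dμ(x) − ∫ e^{ψ(x)} dx`. -/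
def Psi (θ : ℝ) (ψ : ℝ → EReal) (μ : Measure ℝ) : EReal :=
  eIntegral μ (fun x => ψ (x - θ)) - ((∫⁻ x, expE (ψ x) : ℝ≥0∞) : EReal)

/-- `L(θ; F) = sup_{ψ ∈ SC₀} Ψ(θ, ψ, F)`. -/
def Ltheta (θ : ℝ) (μ : Measure ℝ) : EReal :=
  ⨆ ψ ∈ {ψ : ℝ → EReal | memSC0 ψ}, Psi θ ψ μ

/-- `L(F) = sup_{θ ∈ ℝ, ψ ∈ SC₀} Ψ(θ, ψ, F)`. -/
def Lsup (μ : Measure ℝ) : EReal := ⨆ θ : ℝ, Ltheta θ μ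

/-- Condition A: `μ` is a probability measure that is not a point mass,
with a finite first absolute moment. -/
def CondA (μ : Measure ℝ) : Prop :=
  IsProbabilityMeasure μ ∧ (∀ x : ℝ, μ ≠ Measure.dirac x) ∧
    (∫⁻ x, ENNReal.ofReal |x| ∂μ) < ⊤

/-- The empirical measure of the data `X₁, …, Xₙ`. -/
def empMeas {n : ℕ} (X : Fin n → ℝ) : Measure ℝ :=
  ((n : ℝ≥0∞))⁻¹ • ∑ i : Fin n, Measure.dirac (X i)

/-- The empirical measure of the first `n` entries of a sequence. -/
def empSeq (X : ℕ → ℝ) (n : ℕ) : Measure ℝ :=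
  ((n : ℝ≥0∞))⁻¹ • ∑ i ∈ Finset.range n, Measure.dirac (X i)

/-- The density `e^ψ` as a real-valued function. -/
def gReal (ψ : ℝ → EReal) (x : ℝ) : ℝ := (expE (ψ x)).toReal

/-- A knot of a concave function `ψ`: a point where the left and right derivatives
differ, or a boundary point of `dom ψ = {ψ > −∞}`. -/
def IsKnot (ψ : ℝ → EReal) (x : ℝ) : Prop :=
  x ∈ frontier {y : ℝ | ψ y ≠ ⊥} ∨
    derivWithin (fun y => (ψ y).toReal) (Set.Iio x) x ≠
      derivWithin (fun y => (ψ y).toReal) (Set.Ioi x) x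

/-- The class `𝒞` of proper closed concave functions `ℝ → [−∞, ∞)`. -/
def memC (φ : ℝ → EReal) : Prop :=
  (∀ x, φ x < ⊤) ∧ (∃ x, φ x ≠ ⊥) ∧ UpperSemicontinuous φ ∧ EConcave φ

/-- The criterion function `ω(φ, F) = ∫ φ dμ − ∫ e^{φ(x)} dx`. -/
def omegaF (φ : ℝ → EReal) (μ : Measure ℝ) : EReal :=
  eIntegral μ φ - ((∫⁻ x, expE (φ x) : ℝ≥0∞) : EReal)

/-- `(θ, ψ)` maximizes `Ψ(·, ·, μ)` over `ℝ × SC₀`. -/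
def IsMaximizer (θ : ℝ) (ψ : ℝ → EReal) (μ : Measure ℝ) : Prop :=
  memSC0 ψ ∧ ∀ (θ' : ℝ) (ψ' : ℝ → EReal), memSC0 ψ' → Psi θ' ψ' μ ≤ Psi θ ψ μ

/-- Condition B: the `θ`-component of a maximizer of `Ψ(·, ·, μ)` is unique. -/
def CondB (μ : Measure ℝ) : Prop :=
  ∀ (θ₁ θ₂ : ℝ) (ψ₁ ψ₂ : ℝ → EReal),
    IsMaximizer θ₁ ψ₁ μ → IsMaximizer θ₂ ψ₂ μ → θ₁ = θ₂

/-- `J(F) = {x : 0 < F(x) < 1}`. -/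
def Jset (μ : Measure ℝ) : Set ℝ := {x : ℝ | 0 < μ (Set.Iic x) ∧ μ (Set.Iic x) < 1}

/-- The Hellinger distance between two densities. -/
def Hdist (f g : ℝ → ℝ) : ℝ :=
  Real.sqrt ((1 / 2) * ∫ x, (Real.sqrt (f x) - Real.sqrt (g x)) ^ 2)

/-- Finite Fisher information for location: `g` is a.e. differentiable with
square-integrable score. -/
def FiniteFisher (g : ℝ → ℝ) : Prop :=
  ∃ D : ℝ → ℝ, (∀ᵐ x : ℝ, HasDerivAt g (D x) x) ∧
    (∫⁻ x, ENNReal.ofReal ((D x) ^ 2 / g x)) < ⊤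

/-- The symmetrization `μ^{sym}_θ = (μ + R_θ#μ)/2` of a measure about `θ`. -/
def symMeas (θ : ℝ) (μ : Measure ℝ) : Measure ℝ :=
  ((2 : ℝ≥0∞))⁻¹ • (μ + Measure.map (fun x => 2 * θ - x) μ)

end

/-!
Let `ψ ∈ SC₀`, `f = e^ψ` and `h = θ' - θ ≠ 0`. The average `φ(z) = (ψ(z - h) + ψ(z + h)) / 2` is
again in `SC₀`, and by the reflection symmetry of `μ` about `θ` the integral of `φ(x - θ)` equals
that of `ψ(x - θ')`. On the other hand `∫ e^φ = ∫ √(f(z - h) f(z + h))` is smaller than `∫ f`: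
applying Cauchy–Schwarz to `f(z - h) - f(z + h)`, a difference of squares, on the half-line
`(0, ∞)` gives

  `(∫_{-h}^h f)² ≤ 4 ((∫ f)² - (∫ e^φ)²)`.

The left-hand side is at least `(2 |h| e^{ψ(h)})²`. Since `φ` is maximal at `0`, where it equals
`ψ(h)`, the integral of `ψ(x - θ')` is at most `μ(ℝ) ψ(h)`; so along a maximizing sequence for
`L(θ')` the value `ψ(h)` stays bounded below and `∫ f` bounded above. Hence `∫ f - ∫ e^φ`, the gain
from moving to `θ`, stays bounded away from zero and the inequality between suprema is strict.
-/

section L2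

variable {α : Type*} [MeasurableSpace α] {μ : Measure α} {u v : α → ℝ}

lemma sq_integral_mul_le (hu : MemLp u 2 μ) (hv : MemLp v 2 μ) :
    (∫ x, u x * v x ∂μ) ^ 2 ≤ (∫ x, u x ^ 2 ∂μ) * ∫ x, v x ^ 2 ∂μ := by
  have inner_toLp {f g : α → ℝ} (hf : MemLp f 2 μ) (hg : MemLp g 2 μ) :
      inner ℝ (hf.toLp f) (hg.toLp g) = ∫ x, f x * g x ∂μ := by
    rw [L2.inner_def]
    refine integral_congr_ae ?_
    filter_upwards [hf.coeFn_toLp, hg.coeFn_toLp] with x hfx hgx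
    rw [hfx, hgx, real_inner_eq_re_inner, RCLike.inner_apply, conj_trivial, mul_comm]
    rfl
  simpa only [inner_toLp, ← sq] using real_inner_mul_inner_self_le (hu.toLp u) (hv.toLp v)

lemma integral_add_const_mul_sq (hu : MemLp u 2 μ) (hv : MemLp v 2 μ) (c : ℝ) :
    ∫ x, (u x + c * v x) ^ 2 ∂μ =
      ∫ x, u x ^ 2 ∂μ + 2 * c * ∫ x, u x * v x ∂μ + c ^ 2 * ∫ x, v x ^ 2 ∂μ := by
  have huv : Integrable (fun x => 2 * c * (u x * v x)) μ := (hu.integrable_mul hv).const_mul _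
  have hvv : Integrable (fun x => c ^ 2 * v x ^ 2) μ := hv.integrable_sq.const_mul _
  have huuv : Integrable (fun x => u x ^ 2 + 2 * c * (u x * v x)) μ := hu.integrable_sq.add huv
  calc ∫ x, (u x + c * v x) ^ 2 ∂μ
      = ∫ x, (u x ^ 2 + 2 * c * (u x * v x) + c ^ 2 * v x ^ 2) ∂μ := by congr with x; ring
    _ = _ := by
      rw [integral_add huuv hvv, integral_add hu.integrable_sq huv,
        integral_const_mul, integral_const_mul]

end L2

section Translation

variable {E : Type*} [NormedAddCommGroup E]

lemma memLp_comp_sub_right {g : ℝ → E} {p : ℝ≥0∞} (hg : MemLp g p) (h : ℝ) :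
    MemLp (fun z => g (z - h)) p :=
  hg.comp_measurePreserving (measurePreserving_sub_right volume h)

lemma memLp_comp_add_right {g : ℝ → E} {p : ℝ≥0∞} (hg : MemLp g p) (h : ℝ) :
    MemLp (fun z => g (z + h)) p :=
  hg.comp_measurePreserving (measurePreserving_add_right volume h)

variable [NormedSpace ℝ E]

lemma setIntegral_Ioi_comp_add_right (f : ℝ → E) (a h : ℝ) :
    ∫ z in Ioi a, f (z + h) = ∫ z in Ioi (a + h), f z := by
  simpa only [preimage_add_const_Ioi, add_sub_cancel_right] using
    (measurePreserving_add_right volume h).setIntegral_preimage_emb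
      (measurableEmbedding_addRight h) f (Ioi (a + h))

lemma setIntegral_Ioi_sub_translate {f : ℝ → E} (hf : Integrable f) (h : ℝ) :
    ∫ z in Ioi 0, (f (z - h) - f (z + h)) = ∫ z in -h..h, f z := by
  rw [integral_sub (hf.comp_sub_right h).integrableOn (hf.comp_add_right h).integrableOn]
  simp only [sub_eq_add_neg _ h, setIntegral_Ioi_comp_add_right, zero_add]
  exact intervalIntegral.integral_Ioi_sub_Ioi' hf.integrableOn hf.integrableOn

lemma sq_intervalIntegral_sq_le {g : ℝ → ℝ} (hg : MemLp g 2) (h : ℝ) :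
    (∫ z in -h..h, g z ^ 2) ^ 2 ≤
      4 * ((∫ z, g z ^ 2) ^ 2 - (∫ z, g (z - h) * g (z + h)) ^ 2) := by
  set m := ∫ z, g z ^ 2
  set A := ∫ z, g (z - h) * g (z + h)
  have hL := memLp_comp_sub_right hg h
  have hR := memLp_comp_add_right hg h
  have integral_sq (c : ℝ) (hc : c ^ 2 = 1) :
      ∫ z, (g (z - h) + c * g (z + h)) ^ 2 = 2 * m + 2 * c * A := by
    rw [integral_add_const_mul_sq hL hR, integral_sub_right_eq_self (fun z => g z ^ 2),
      integral_add_right_eq_self (fun z => g z ^ 2), hc]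
    ring
  have memLp (c : ℝ) : MemLp (fun z => g (z - h) + c * g (z + h)) 2 := hL.add (hR.const_mul c)
  have setIntegral_le (c : ℝ) (hc : c ^ 2 = 1) :
      ∫ z in Ioi 0, (g (z - h) + c * g (z + h)) ^ 2 ≤ 2 * m + 2 * c * A :=
    (setIntegral_le_integral (memLp c).integrable_sq (ae_of_all _ fun z => sq_nonneg _)).trans_eq
      (integral_sq c hc)
  calc (∫ z in -h..h, g z ^ 2) ^ 2
      = (∫ z in Ioi 0, (g (z - h) + -1 * g (z + h)) * (g (z - h) + 1 * g (z + h))) ^ 2 := by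
        rw [← setIntegral_Ioi_sub_translate hg.integrable_sq]
        congr with z
        ring
    _ ≤ (∫ z in Ioi 0, (g (z - h) + -1 * g (z + h)) ^ 2) *
          ∫ z in Ioi 0, (g (z - h) + 1 * g (z + h)) ^ 2 :=
        sq_integral_mul_le ((memLp (-1)).restrict _) ((memLp 1).restrict _)
    _ ≤ (2 * m + 2 * (-1) * A) * (2 * m + 2 * 1 * A) := by
        gcongr
        · exact (integral_nonneg fun z => sq_nonneg _).trans (setIntegral_le (-1) (by norm_num))
        · exact setIntegral_le (-1) (by norm_num)
        · exact setIntegral_le 1 (by norm_num)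
    _ = 4 * (m ^ 2 - A ^ 2) := by ring

end Translation

section ScalarBounds

lemma mul_sub_mul_exp_le {t a : ℝ} (ht : 0 < t) (ha : 0 < a) (x : ℝ) :
    t * x - a * Real.exp x ≤ t * (Real.log (t / a) - 1) := by
  have hexp : Real.exp (x - Real.log (t / a)) * t = a * Real.exp x := by
    rw [Real.exp_sub, Real.exp_log (by positivity)]
    field_simp
  have htangent := mul_le_mul_of_nonneg_right (Real.add_one_le_exp (x - Real.log (t / a))) ht.le
  linarith

lemma le_two_mul_of_sq_le_four_mul_sq_sub_sq {y m A : ℝ} (hm : 0 ≤ m)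
    (h : y ^ 2 ≤ 4 * (m ^ 2 - A ^ 2)) : y ≤ 2 * m :=
  abs_le_of_sq_le_sq' (by nlinarith [sq_nonneg A]) (by positivity) |>.2

/-- The lower bound `k` forces `d` to be bounded below and `m` above, so `m - A` is bounded away
from zero because `m² - A² = (m + A)(m - A)` is. -/
lemma exists_pos_forall_le_sub {t r : ℝ} (ht : 0 < t) (hr : 0 < r) (k : ℝ) :
    ∃ η > 0, ∀ d m A : ℝ, 0 ≤ m → (r * Real.exp d) ^ 2 ≤ 4 * (m ^ 2 - A ^ 2) →
      k ≤ t * d - m → η ≤ m - A := by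
  set B := 2 * |t * (Real.log (t / (r / 4)) - 1) - k| + 1 with hB
  refine ⟨(r * Real.exp (k / t)) ^ 2 / (8 * B), by positivity, fun d m A hm hgap hk => ?_⟩
  have hexp : r * Real.exp d ≤ 2 * m := le_two_mul_of_sq_le_four_mul_sq_sub_sq hm hgap
  have hmB : m ≤ B := by
    have hlegendre := mul_sub_mul_exp_le ht (by positivity : 0 < r / 4) d
    have habs := le_abs_self (t * (Real.log (t / (r / 4)) - 1) - k)
    linarith
  have hd : k / t ≤ d := by rw [div_le_iff₀' ht]; linarith
  have hAm : A ≤ m := abs_le_of_sq_le_sq' (by nlinarith [sq_nonneg (r * Real.exp d)]) hm |>.2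
  rw [div_le_iff₀' (by positivity)]
  calc (r * Real.exp (k / t)) ^ 2 ≤ (r * Real.exp d) ^ 2 := by gcongr
    _ ≤ 4 * ((m + A) * (m - A)) := by linarith
    _ ≤ 8 * B * (m - A) := by nlinarith

end ScalarBounds

section EReal

lemma toENN_eq_toENNReal (y : EReal) : toENN y = y.toENNReal := rfl

lemma expE_eq_exp (y : EReal) : expE y = y.exp := by
  induction y <;> simp [expE]

lemma coe_half_mul_add_coe_half_mul (y : EReal) :
    ((1 / 2 : ℝ) : EReal) * y + ((1 / 2 : ℝ) : EReal) * y = y := by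
  rw [← EReal.right_distrib_of_nonneg (by positivity) (by positivity), ← EReal.coe_add, add_halves,
    EReal.coe_one, one_mul]

lemma coe_mul_lt_top {t : ℝ} (ht : 0 ≤ t) {y : EReal} (hy : y < ⊤) : (t : EReal) * y < ⊤ := by
  rw [lt_top_iff_ne_top, EReal.mul_ne_top]
  simp [hy.ne, ht]

lemma toReal_eq_toReal_toENNReal_sub (y : EReal) :
    y.toReal = y.toENNReal.toReal - (-y).toENNReal.toReal := by
  induction y with
  | bot => simp
  | top => simp
  | coe r =>
    rw [← EReal.coe_neg]
    simp [EReal.toENNReal_of_ne_top, ENNReal.toReal_ofReal']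

end EReal

section EIntegral

variable {μ : Measure ℝ} {φ : ℝ → EReal}

lemma eIntegral_eq_integral_toReal (hφ : ∀ x, φ x < ⊤) (hbot : ∀ᵐ x ∂μ, φ x ≠ ⊥)
    (hint : Integrable (fun x => (φ x).toReal) μ) :
    eIntegral μ φ = ((∫ x, (φ x).toReal ∂μ : ℝ) : EReal) := by
  have hpos : ∫⁻ x, toENN (φ x) ∂μ = ∫⁻ x, ENNReal.ofReal (φ x).toReal ∂μ :=
    lintegral_congr fun x => EReal.toENNReal_of_ne_top (hφ x).ne
  have hneg : ∫⁻ x, toENN (-φ x) ∂μ = ∫⁻ x, ENNReal.ofReal (-(φ x).toReal) ∂μ := by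
    refine lintegral_congr_ae ?_
    filter_upwards [hbot] with x hx
    rw [toENN_eq_toENNReal, EReal.toENNReal_of_ne_top (by simpa using hx), EReal.toReal_neg_eq]
  have hneg_top : ∫⁻ x, ENNReal.ofReal (-(φ x).toReal) ∂μ ≠ ⊤ := hint.neg.lintegral_lt_top.ne
  rw [eIntegral, hpos, hneg, integral_eq_lintegral_pos_part_sub_lintegral_neg_part hint,
    EReal.coe_sub, EReal.coe_ennreal_toReal hint.lintegral_lt_top.ne,
    EReal.coe_ennreal_toReal hneg_top]

lemma ae_ne_bot_and_integrable_toReal_of_eIntegral_ne_bot [IsFiniteMeasure μ]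
    (hφ : Measurable φ) {s : ℝ} (hs : ∀ x, φ x ≤ s) (hbot : eIntegral μ φ ≠ ⊥) :
    (∀ᵐ x ∂μ, φ x ≠ ⊥) ∧ Integrable (fun x => (φ x).toReal) μ := by
  have hpos : ∫⁻ x, (φ x).toENNReal ∂μ ≠ ⊤ := by
    refine ne_top_of_le_ne_top ?_ (lintegral_mono fun x => EReal.toENNReal_le_toENNReal (hs x))
    simpa using ENNReal.mul_ne_top ENNReal.ofReal_ne_top (measure_ne_top μ univ)
  have hneg : ∫⁻ x, (-φ x).toENNReal ∂μ ≠ ⊤ := by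
    intro h
    simp [eIntegral, toENN_eq_toENNReal, h] at hbot
  constructor
  · filter_upwards [ae_lt_top hφ.neg.ereal_toENNReal hneg] with x hx hx'
    simp [hx'] at hx
  · simp only [toReal_eq_toReal_toENNReal_sub (φ _)]
    exact (integrable_toReal_of_lintegral_ne_top hφ.ereal_toENNReal.aemeasurable hpos).sub
      (integrable_toReal_of_lintegral_ne_top hφ.neg.ereal_toENNReal.aemeasurable hneg)

end EIntegral

section Concave

namespace EConcave

variable {φ ψ : ℝ → EReal}

lemma comp_add_right (hψ : EConcave ψ) (c : ℝ) : EConcave fun z => ψ (z + c) := by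
  intro x y t ht ht'
  convert hψ (x + c) (y + c) t ht ht' using 2
  ring

lemma const_mul (hψ : EConcave ψ) {c : ℝ} (hc : 0 ≤ c) : EConcave fun z => (c : EReal) * ψ z := by
  intro x y t ht ht'
  calc (t : EReal) * (c * ψ x) + ((1 - t : ℝ) : EReal) * (c * ψ y)
      = c * (t * ψ x + ((1 - t : ℝ) : EReal) * ψ y) := by
        rw [EReal.left_distrib_of_nonneg_of_ne_top (by positivity) (EReal.coe_ne_top c),
          mul_left_comm (c : EReal), mul_left_comm (c : EReal)]
    _ ≤ c * ψ (t * x + (1 - t) * y) := mul_le_mul_of_nonneg_left (hψ x y t ht ht') (by positivity)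

lemma add (hφ : EConcave φ) (hψ : EConcave ψ) : EConcave fun z => φ z + ψ z := by
  intro x y t ht ht'
  have ht'' : (0 : EReal) ≤ ((1 - t : ℝ) : EReal) := by exact_mod_cast sub_nonneg.2 ht'
  rw [EReal.left_distrib_of_nonneg_of_ne_top (by positivity) (EReal.coe_ne_top t),
    EReal.left_distrib_of_nonneg_of_ne_top ht'' (EReal.coe_ne_top _), add_add_add_comm]
  exact add_le_add (hφ x y t ht ht') (hψ x y t ht ht')

lemma le_of_abs_le (hψ : EConcave ψ) (heven : ∀ x, ψ (-x) = ψ x) {x y : ℝ}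
    (hxy : |x| ≤ |y|) : ψ y ≤ ψ x := by
  have hx : x ∈ segment ℝ y (-y) := by
    rw [segment_eq_uIcc, mem_uIcc]
    rcases abs_cases y with ⟨hy, -⟩ | ⟨hy, -⟩
    · exact Or.inr (abs_le.1 (hxy.trans_eq hy))
    · exact Or.inl (by simpa using abs_le.1 (hxy.trans_eq hy))
  obtain ⟨t, s, ht, hs, hts, rfl⟩ := hx
  obtain rfl : s = 1 - t := by linarith
  have hconcave := hψ y (-y) t ht (by linarith)
  rwa [heven, ← EReal.right_distrib_of_nonneg (by positivity) (by exact_mod_cast hs),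
    ← EReal.coe_add, hts, EReal.coe_one, one_mul] at hconcave

end EConcave

lemma eConcave_coe_of_concaveOn {f : ℝ → ℝ} (hf : ConcaveOn ℝ univ f) :
    EConcave fun x => (f x : EReal) := by
  intro x y t ht ht'
  have h := hf.2 (mem_univ x) (mem_univ y) ht (sub_nonneg.2 ht') (add_sub_cancel t 1)
  simp only [smul_eq_mul] at h
  beta_reduce
  exact_mod_cast h

namespace memSC0

variable {ψ : ℝ → EReal}

lemma lt_top (hψ : memSC0 ψ) (x : ℝ) : ψ x < ⊤ := hψ.1 x

lemma even (hψ : memSC0 ψ) (x : ℝ) : ψ (-x) = ψ x := hψ.2.2.2.2 x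

lemma measurable (hψ : memSC0 ψ) : Measurable ψ := hψ.2.2.1.measurable

lemma le_of_abs_le (hψ : memSC0 ψ) {x y : ℝ} (hxy : |x| ≤ |y|) : ψ y ≤ ψ x :=
  hψ.2.2.2.1.le_of_abs_le hψ.even hxy

lemma zero_ne_bot (hψ : memSC0 ψ) : ψ 0 ≠ ⊥ := by
  obtain ⟨x, hx⟩ := hψ.2.1
  exact ne_bot_of_le_ne_bot hx (hψ.le_of_abs_le (by simp))

lemma le_coe_toReal_zero (hψ : memSC0 ψ) (x : ℝ) : ψ x ≤ ((ψ 0).toReal : EReal) := by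
  rw [EReal.coe_toReal (hψ.lt_top 0).ne hψ.zero_ne_bot]
  exact hψ.le_of_abs_le (by simp)

end memSC0

lemma memSC0_neg_abs : memSC0 fun x => ((-|x| : ℝ) : EReal) := by
  refine ⟨fun x => EReal.coe_lt_top _, ⟨0, EReal.coe_ne_bot _⟩, ?_,
    eConcave_coe_of_concaveOn ?_, by simp⟩
  · exact (continuous_coe_real_ereal.comp continuous_abs.neg).upperSemicontinuous
  · exact (convexOn_norm convex_univ).neg

end Concave

section TranslateAverage

/-- The average `(ψ(· - h) + ψ(· + h)) / 2` of the two translates of `ψ` by `±h`. It lies in `SC₀`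
when `ψ` does, and averages the values of `ψ` at a point and at its reflection. -/
noncomputable def translateAverage (h : ℝ) (ψ : ℝ → EReal) (z : ℝ) : EReal :=
  ((1 / 2 : ℝ) : EReal) * ψ (z - h) + ((1 / 2 : ℝ) : EReal) * ψ (z + h)

variable {ψ : ℝ → EReal} {h : ℝ}

lemma translateAverage_lt_top (hψ : ∀ x, ψ x < ⊤) (h z : ℝ) : translateAverage h ψ z < ⊤ :=
  EReal.add_lt_top (coe_mul_lt_top (by norm_num) (hψ _)).ne (coe_mul_lt_top (by norm_num) (hψ _)).ne

lemma translateAverage_zero (hψ : ∀ x, ψ (-x) = ψ x) (h : ℝ) : translateAverage h ψ 0 = ψ h := by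
  rw [translateAverage, zero_sub, zero_add, hψ, coe_half_mul_add_coe_half_mul]

lemma translateAverage_neg (hψ : ∀ x, ψ (-x) = ψ x) (h z : ℝ) :
    translateAverage h ψ (-z) = translateAverage h ψ z := by
  rw [translateAverage, translateAverage, ← hψ (z - h), ← hψ (z + h), add_comm]
  congr 3 <;> ring

lemma translateAverage_sub_eq (hψ : ∀ x, ψ (-x) = ψ x) (θ θ' x : ℝ) :
    translateAverage (θ' - θ) ψ (x - θ) =
      ((1 / 2 : ℝ) : EReal) * ψ (x - θ') + ((1 / 2 : ℝ) : EReal) * ψ (2 * θ - x - θ') := by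
  rw [translateAverage, ← hψ (2 * θ - x - θ')]
  congr 3 <;> ring

lemma EConcave.translateAverage (hψ : EConcave ψ) (h : ℝ) : EConcave (translateAverage h ψ) :=
  ((hψ.comp_add_right (-h)).const_mul (by norm_num)).add
    ((hψ.comp_add_right h).const_mul (by norm_num))

lemma continuous_coe_mul {c : ℝ} (hc : c ≠ 0) : Continuous fun y : EReal => (c : EReal) * y := by
  have hc' : (c : EReal) ≠ 0 := by exact_mod_cast hc
  exact continuous_iff_continuousAt.2 fun y => EReal.Tendsto.mul tendsto_const_nhds tendsto_id
    (Or.inl hc') (Or.inl hc') (Or.inl (EReal.coe_ne_bot c)) (Or.inl (EReal.coe_ne_top c))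

lemma upperSemicontinuous_translateAverage (hψ : UpperSemicontinuous ψ) (htop : ∀ x, ψ x < ⊤)
    (h : ℝ) : UpperSemicontinuous (translateAverage h ψ) := by
  have half_translate (c : ℝ) :
      UpperSemicontinuous fun z => ((1 / 2 : ℝ) : EReal) * ψ (z + c) :=
    (continuous_coe_mul (by norm_num)).comp_upperSemicontinuous
      (hψ.comp (g := fun z => z + c) (by fun_prop))
      fun _ _ hab => mul_le_mul_of_nonneg_left hab (by positivity)
  refine (half_translate (-h)).add' (half_translate h) fun z => EReal.continuousAt_add
    (Or.inl (coe_mul_lt_top (by norm_num) (htop _)).ne)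
    (Or.inr (coe_mul_lt_top (by norm_num) (htop _)).ne)

lemma memSC0.translateAverage (hψ : memSC0 ψ) (hh : ψ h ≠ ⊥) : memSC0 (translateAverage h ψ) :=
  ⟨translateAverage_lt_top hψ.lt_top h, ⟨0, by rwa [translateAverage_zero hψ.even]⟩,
    upperSemicontinuous_translateAverage hψ.2.2.1 hψ.lt_top h, hψ.2.2.2.1.translateAverage h,
    translateAverage_neg hψ.even h⟩

end TranslateAverage

section Density

variable {ψ : ℝ → EReal}

lemma gReal_nonneg (ψ : ℝ → EReal) (x : ℝ) : 0 ≤ gReal ψ x := ENNReal.toReal_nonneg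

lemma expE_eq_ofReal_gReal {x : ℝ} (hx : ψ x < ⊤) : expE (ψ x) = ENNReal.ofReal (gReal ψ x) := by
  rw [gReal, ENNReal.ofReal_toReal]
  rw [expE_eq_exp, ne_eq, EReal.exp_eq_top_iff]
  exact hx.ne

lemma gReal_eq_exp_toReal {x : ℝ} (hx : ψ x < ⊤) (hx' : ψ x ≠ ⊥) :
    gReal ψ x = Real.exp (ψ x).toReal := by
  rw [gReal, expE, if_neg hx', if_neg hx.ne, ENNReal.toReal_ofReal (Real.exp_pos _).le]

lemma sqrt_gReal (ψ : ℝ → EReal) (x : ℝ) :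
    √(gReal ψ x) = (((1 / 2 : ℝ) : EReal) * ψ x).exp.toReal := by
  rw [Real.sqrt_eq_iff_mul_self_eq (gReal_nonneg ψ x) ENNReal.toReal_nonneg, gReal, expE_eq_exp,
    ← ENNReal.toReal_mul, ← EReal.exp_add, coe_half_mul_add_coe_half_mul]

lemma gReal_translateAverage (h : ℝ) (ψ : ℝ → EReal) (z : ℝ) :
    gReal (translateAverage h ψ) z = √(gReal ψ (z - h)) * √(gReal ψ (z + h)) := by
  rw [sqrt_gReal, sqrt_gReal, ← ENNReal.toReal_mul, ← EReal.exp_add, ← expE_eq_exp]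
  rfl

lemma lintegral_expE_eq_ofReal (hψ : ∀ x, ψ x < ⊤) (hint : Integrable (gReal ψ)) :
    ∫⁻ x, expE (ψ x) = ENNReal.ofReal (∫ x, gReal ψ x) := by
  rw [ofReal_integral_eq_lintegral_ofReal hint (ae_of_all _ (gReal_nonneg ψ))]
  exact lintegral_congr fun x => expE_eq_ofReal_gReal (hψ x)

lemma measurable_expE_comp (hψ : Measurable ψ) : Measurable fun x => expE (ψ x) := by
  simp only [expE_eq_exp]
  exact hψ.ereal_exp

lemma memLp_two_sqrt_gReal (hint : Integrable (gReal ψ)) : MemLp (fun x => √(gReal ψ x)) 2 := by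
  have hmeas : AEStronglyMeasurable fun x => √(gReal ψ x) :=
    Real.continuous_sqrt.comp_aestronglyMeasurable hint.aestronglyMeasurable
  rw [memLp_two_iff_integrable_sq hmeas]
  simpa only [Real.sq_sqrt (gReal_nonneg ψ _)] using hint

lemma integrable_gReal_translateAverage (hint : Integrable (gReal ψ)) (h : ℝ) :
    Integrable (gReal (translateAverage h ψ)) := by
  have hg := memLp_two_sqrt_gReal hint
  rw [funext (gReal_translateAverage h ψ)]
  exact (memLp_comp_sub_right hg h).integrable_mul (memLp_comp_add_right hg h)

lemma sq_intervalIntegral_gReal_le (hint : Integrable (gReal ψ)) (h : ℝ) :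
    (∫ z in -h..h, gReal ψ z) ^ 2 ≤
      4 * ((∫ z, gReal ψ z) ^ 2 - (∫ z, gReal (translateAverage h ψ) z) ^ 2) := by
  simpa only [Real.sq_sqrt (gReal_nonneg ψ _), ← gReal_translateAverage] using
    sq_intervalIntegral_sq_le (memLp_two_sqrt_gReal hint) h

lemma gReal_le_of_abs_le (hψ : memSC0 ψ) {x y : ℝ} (hxy : |x| ≤ |y|) : gReal ψ y ≤ gReal ψ x := by
  refine ENNReal.toReal_mono ?_ ?_
  · exact (expE_eq_ofReal_gReal (hψ.lt_top x)).trans_ne ENNReal.ofReal_ne_top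
  · simpa only [expE_eq_exp] using EReal.exp_monotone (hψ.le_of_abs_le hxy)

lemma two_mul_abs_mul_gReal_le (hψ : memSC0 ψ) (hint : Integrable (gReal ψ)) (h : ℝ) :
    2 * |h| * gReal ψ h ≤ |∫ z in -h..h, gReal ψ z| := by
  have gReal_le (z : ℝ) (hz : z ∈ uIoc (-h) h) : gReal ψ h ≤ gReal ψ z := by
    refine gReal_le_of_abs_le hψ (abs_le.2 ?_)
    rcases mem_uIoc.1 hz with hz | hz <;>
      constructor <;> linarith [le_abs_self h, neg_le_abs h]
  have hvolume : volume.real (uIoc (-h) h) = 2 * |h| := by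
    rw [measureReal_def, Real.volume_uIoc, ENNReal.toReal_ofReal (abs_nonneg _), sub_neg_eq_add,
      ← two_mul, abs_mul, abs_two]
  calc 2 * |h| * gReal ψ h = gReal ψ h * volume.real (uIoc (-h) h) := by rw [hvolume, mul_comm]
    _ ≤ ∫ z in uIoc (-h) h, gReal ψ z :=
        setIntegral_ge_of_const_le_real measurableSet_uIoc (by simp) gReal_le hint.integrableOn
    _ ≤ |∫ z in -h..h, gReal ψ z| := by
        rw [intervalIntegral.abs_integral_eq_abs_integral_uIoc]
        exact le_abs_self _

end Density

section Criterion

/-- The two integrals in `Ψ(θ, ψ, μ)` are finite, so that `Ψ` is a difference of real integrals. -/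
structure PsiFinite (θ : ℝ) (ψ : ℝ → EReal) (μ : Measure ℝ) : Prop where
  ae_ne_bot : ∀ᵐ x ∂μ, ψ (x - θ) ≠ ⊥
  integrable_toReal : Integrable (fun x => (ψ (x - θ)).toReal) μ
  integrable_gReal : Integrable (gReal ψ)

variable {μ : Measure ℝ} {θ θ' : ℝ} {ψ : ℝ → EReal}

lemma PsiFinite.psi_eq (H : PsiFinite θ ψ μ) (hψ : ∀ x, ψ x < ⊤) :
    Psi θ ψ μ = ((∫ x, (ψ (x - θ)).toReal ∂μ - ∫ x, gReal ψ x : ℝ) : EReal) := by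
  rw [Psi, eIntegral_eq_integral_toReal (fun x => hψ _) H.ae_ne_bot H.integrable_toReal,
    lintegral_expE_eq_ofReal hψ H.integrable_gReal, EReal.coe_sub, EReal.coe_ennreal_ofReal,
    max_eq_left (integral_nonneg (gReal_nonneg ψ))]

lemma psiFinite_of_psi_ne_bot [IsFiniteMeasure μ] (hψ : memSC0 ψ) (hbot : Psi θ ψ μ ≠ ⊥) :
    PsiFinite θ ψ μ := by
  have hfirst : eIntegral μ (fun x => ψ (x - θ)) ≠ ⊥ := fun h => hbot (by simp [Psi, h])
  have hsecond : ∫⁻ x, expE (ψ x) ≠ ⊤ := fun h => hbot (by simp [Psi, h])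
  obtain ⟨hae, hint⟩ := ae_ne_bot_and_integrable_toReal_of_eIntegral_ne_bot
    (hψ.measurable.comp (measurable_id.sub_const θ)) (fun x => hψ.le_coe_toReal_zero (x - θ)) hfirst
  exact ⟨hae, hint, integrable_toReal_of_lintegral_ne_top
    (measurable_expE_comp hψ.measurable).aemeasurable hsecond⟩

lemma PsiFinite.integral_toReal_le [IsFiniteMeasure μ] (H : PsiFinite θ ψ μ) (hψ : memSC0 ψ) :
    ∫ x, (ψ (x - θ)).toReal ∂μ ≤ μ.real univ * (ψ 0).toReal := by
  rw [← smul_eq_mul, ← integral_const]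
  refine integral_mono_ae H.integrable_toReal (integrable_const _) ?_
  filter_upwards [H.ae_ne_bot] with x hx
  exact EReal.toReal_le_toReal (hψ.le_of_abs_le (by simp)) hx (hψ.lt_top 0).ne

section Reflection

variable (hμ : MeasurePreserving (fun x => 2 * θ - x) μ μ)

include hμ

lemma PsiFinite.ae_translateAverage_eq (H : PsiFinite θ' ψ μ) (hψ : memSC0 ψ) :
    ∀ᵐ x ∂μ, translateAverage (θ' - θ) ψ (x - θ) =
      ((1 / 2 * (ψ (x - θ')).toReal + 1 / 2 * (ψ (2 * θ - x - θ')).toReal : ℝ) : EReal) := by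
  filter_upwards [H.ae_ne_bot, hμ.quasiMeasurePreserving.ae H.ae_ne_bot] with x hx hx'
  rw [translateAverage_sub_eq hψ.even, EReal.coe_add, EReal.coe_mul, EReal.coe_mul,
    EReal.coe_toReal (hψ.lt_top _).ne hx, EReal.coe_toReal (hψ.lt_top _).ne hx']

lemma PsiFinite.translateAverage_sub (H : PsiFinite θ' ψ μ) (hψ : memSC0 ψ) :
    PsiFinite θ (translateAverage (θ' - θ) ψ) μ := by
  have hae := H.ae_translateAverage_eq hμ hψ
  refine ⟨?_, ?_, integrable_gReal_translateAverage H.integrable_gReal _⟩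
  · filter_upwards [hae] with x hx
    exact hx.trans_ne (EReal.coe_ne_bot _)
  · refine ((H.integrable_toReal.const_mul (1 / 2)).add
      ((hμ.integrable_comp_of_integrable H.integrable_toReal).const_mul (1 / 2))).congr ?_
    filter_upwards [hae] with x hx
    rw [hx]
    rfl

lemma PsiFinite.integral_translateAverage (H : PsiFinite θ' ψ μ) (hψ : memSC0 ψ) :
    ∫ x, (translateAverage (θ' - θ) ψ (x - θ)).toReal ∂μ =
      ∫ x, (ψ (x - θ')).toReal ∂μ := by
  have hint : Integrable (fun x => (ψ (2 * θ - x - θ')).toReal) μ :=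
    hμ.integrable_comp_of_integrable H.integrable_toReal
  have hreflect : ∫ x, (ψ (2 * θ - x - θ')).toReal ∂μ = ∫ x, (ψ (x - θ')).toReal ∂μ :=
    hμ.integral_comp (MeasurableEquiv.subLeft (2 * θ)).measurableEmbedding
      fun x => (ψ (x - θ')).toReal
  calc ∫ x, (translateAverage (θ' - θ) ψ (x - θ)).toReal ∂μ
      = ∫ x, (1 / 2 * (ψ (x - θ')).toReal + 1 / 2 * (ψ (2 * θ - x - θ')).toReal) ∂μ := by
        refine integral_congr_ae ?_
        filter_upwards [H.ae_translateAverage_eq hμ hψ] with x hx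
        rw [hx, EReal.toReal_coe]
    _ = ∫ x, (ψ (x - θ')).toReal ∂μ := by
        rw [integral_add (H.integrable_toReal.const_mul _) (hint.const_mul _), integral_const_mul,
          integral_const_mul, hreflect]
        ring

variable [NeZero μ]

lemma PsiFinite.apply_sub_ne_bot (H : PsiFinite θ' ψ μ) (hψ : memSC0 ψ) : ψ (θ' - θ) ≠ ⊥ := by
  obtain ⟨x, hx⟩ := (H.translateAverage_sub hμ hψ).ae_ne_bot.exists
  rw [← translateAverage_zero hψ.even]
  exact ne_bot_of_le_ne_bot hx ((hψ.2.2.2.1.translateAverage _).le_of_abs_le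
    (translateAverage_neg hψ.even _) (by simp))

lemma PsiFinite.integral_toReal_le_of_reflection [IsFiniteMeasure μ] (H : PsiFinite θ' ψ μ)
    (hψ : memSC0 ψ) :
    ∫ x, (ψ (x - θ')).toReal ∂μ ≤ μ.real univ * (ψ (θ' - θ)).toReal := by
  rw [← H.integral_translateAverage hμ hψ, ← translateAverage_zero hψ.even]
  have hφ := hψ.translateAverage (H.apply_sub_ne_bot hμ hψ)
  exact (H.translateAverage_sub hμ hψ).integral_toReal_le hφ

lemma PsiFinite.sq_mul_exp_le (H : PsiFinite θ' ψ μ) (hψ : memSC0 ψ) :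
    (2 * |θ' - θ| * Real.exp (ψ (θ' - θ)).toReal) ^ 2 ≤
      4 * ((∫ z, gReal ψ z) ^ 2 - (∫ z, gReal (translateAverage (θ' - θ) ψ) z) ^ 2) := by
  rw [← gReal_eq_exp_toReal (hψ.lt_top _) (H.apply_sub_ne_bot hμ hψ)]
  refine le_trans ?_ (sq_intervalIntegral_gReal_le H.integrable_gReal (θ' - θ))
  rw [← sq_abs (intervalIntegral _ _ _ _)]
  have := gReal_nonneg ψ (θ' - θ)
  gcongr
  exact two_mul_abs_mul_gReal_le hψ H.integrable_gReal (θ' - θ)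

end Reflection

end Criterion

section Supremum

variable {μ : Measure ℝ} [IsFiniteMeasure μ] {θ θ' : ℝ} {ψ : ℝ → EReal}

lemma psi_le_ltheta (hψ : memSC0 ψ) (θ : ℝ) (μ : Measure ℝ) : Psi θ ψ μ ≤ Ltheta θ μ :=
  le_iSup₂ (f := fun ψ (_ : ψ ∈ {ψ | memSC0 ψ}) => Psi θ ψ μ) ψ hψ

lemma integrable_exp_neg_abs : Integrable fun x : ℝ => Real.exp (-|x|) := by
  rw [← integrableOn_univ, ← Iic_union_Ioi (a := (0 : ℝ))]
  refine IntegrableOn.union ?_ ?_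
  · exact (integrableOn_exp_Iic 0).congr_fun
      (fun x hx => by rw [abs_of_nonpos hx, neg_neg]) measurableSet_Iic
  · exact (integrableOn_exp_neg_Ioi 0).congr_fun
      (fun x hx => by rw [abs_of_pos hx]) measurableSet_Ioi

lemma ltheta_ne_bot (hint : Integrable (fun x => x) μ) (θ : ℝ) : Ltheta θ μ ≠ ⊥ := by
  have H : PsiFinite θ (fun x => ((-|x| : ℝ) : EReal)) μ := by
    refine ⟨ae_of_all _ fun x => EReal.coe_ne_bot _, ?_, ?_⟩
    · exact (hint.sub (integrable_const θ)).abs.neg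
    · refine integrable_exp_neg_abs.congr (ae_of_all _ fun x => ?_)
      exact (gReal_eq_exp_toReal (memSC0_neg_abs.lt_top x) (EReal.coe_ne_bot _)).symm
  refine ne_bot_of_le_ne_bot ?_ (psi_le_ltheta memSC0_neg_abs θ μ)
  rw [H.psi_eq memSC0_neg_abs.lt_top]
  exact EReal.coe_ne_bot _

variable [NeZero μ] (hμ : MeasurePreserving (fun x => 2 * θ - x) μ μ) (hθ : θ' ≠ θ)

include hμ hθ

lemma ltheta_lt_top : Ltheta θ' μ < ⊤ := by
  have ht : 0 < μ.real univ := measureReal_univ_pos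
  have hr : 0 < |θ' - θ| := abs_pos.2 (sub_ne_zero.2 hθ)
  refine (iSup₂_le fun ψ hψ => ?_ : Ltheta θ' μ ≤
    ((μ.real univ * (Real.log (μ.real univ / |θ' - θ|) - 1) : ℝ) : EReal)).trans_lt
      (EReal.coe_lt_top _)
  by_cases hbot : Psi θ' ψ μ = ⊥
  · simp [hbot]
  have H := psiFinite_of_psi_ne_bot hψ hbot
  rw [H.psi_eq hψ.lt_top, EReal.coe_le_coe_iff]
  have hmass := le_two_mul_of_sq_le_four_mul_sq_sub_sq (integral_nonneg (gReal_nonneg ψ))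
    (H.sq_mul_exp_le hμ hψ)
  have hle := H.integral_toReal_le_of_reflection hμ hψ
  have hlegendre := mul_sub_mul_exp_le ht hr (ψ (θ' - θ)).toReal
  linarith

lemma exists_pos_forall_psi_add_le (k : ℝ) :
    ∃ η : ℝ, 0 < η ∧ ∀ ψ, memSC0 ψ → k ≤ Psi θ' ψ μ → Psi θ' ψ μ + η ≤ Ltheta θ μ := by
  obtain ⟨η, hη, hgain⟩ := exists_pos_forall_le_sub (t := μ.real univ) (r := 2 * |θ' - θ|)
    measureReal_univ_pos (mul_pos two_pos (abs_pos.2 (sub_ne_zero.2 hθ))) k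
  refine ⟨η, hη, fun ψ hψ hk => ?_⟩
  have H := psiFinite_of_psi_ne_bot hψ (ne_bot_of_le_ne_bot (EReal.coe_ne_bot k) hk)
  have hφ := hψ.translateAverage (H.apply_sub_ne_bot hμ hψ)
  refine le_trans ?_ (psi_le_ltheta hφ θ μ)
  rw [H.psi_eq hψ.lt_top, EReal.coe_le_coe_iff] at hk
  rw [H.psi_eq hψ.lt_top, (H.translateAverage_sub hμ hψ).psi_eq hφ.lt_top,
    H.integral_translateAverage hμ hψ, ← EReal.coe_add, EReal.coe_le_coe_iff]
  have hη_le := hgain _ _ _ (integral_nonneg (gReal_nonneg ψ)) (H.sq_mul_exp_le hμ hψ)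
    (hk.trans (sub_le_sub_right (H.integral_toReal_le_of_reflection hμ hψ) _))
  linarith

lemma ltheta_lt_ltheta (hint : Integrable (fun x => x) μ) : Ltheta θ' μ < Ltheta θ μ := by
  by_contra! hle
  have hbot : Ltheta θ' μ ≠ ⊥ := ne_bot_of_le_ne_bot (ltheta_ne_bot hint θ) hle
  lift Ltheta θ' μ to ℝ using ⟨(ltheta_lt_top hμ hθ).ne, hbot⟩ with l hl
  obtain ⟨η, hη, hgain⟩ := exists_pos_forall_psi_add_le hμ hθ (l - 1)
  have hlt : ((l - min 1 η : ℝ) : EReal) < Ltheta θ' μ := by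
    rw [← hl, EReal.coe_lt_coe_iff]
    exact sub_lt_self l (lt_min one_pos hη)
  obtain ⟨ψ, hψ, hPsi⟩ := lt_biSup_iff.1 hlt
  have hk : ((l - 1 : ℝ) : EReal) ≤ Psi θ' ψ μ := by
    refine le_trans ?_ hPsi.le
    exact_mod_cast sub_le_sub_left (min_le_left 1 η) l
  refine absurd ((hgain ψ hψ hk).trans hle) (not_le.2 ?_)
  calc (l : EReal) = ((l - η : ℝ) : EReal) + η := by rw [← EReal.coe_add, sub_add_cancel]
    _ ≤ ((l - min 1 η : ℝ) : EReal) + η := by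
        gcongr
        exact min_le_right 1 η
    _ < Psi θ' ψ μ + η := EReal.add_lt_add_right_coe hPsi η

end Supremum

theorem statement10_general (μ : Measure ℝ) [IsFiniteMeasure μ] [NeZero μ]
    (hint : Integrable (fun x => x) μ) (θ : ℝ)
    (hsym : Measure.map (fun x => 2 * θ - x) μ = μ) :
    ∀ θ' : ℝ, Ltheta θ' μ ≤ Ltheta θ μ ∧ (θ' ≠ θ → Ltheta θ' μ < Ltheta θ μ) := by
  have hμ : MeasurePreserving (fun x => 2 * θ - x) μ μ := ⟨by fun_prop, hsym⟩
  refine fun θ' => ⟨?_, fun hθ => ltheta_lt_ltheta hμ hθ hint⟩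
  rcases eq_or_ne θ' θ with rfl | hθ
  · exact le_rfl
  · exact (ltheta_lt_ltheta hμ hθ hint).le

/-- If `μ` satisfies Condition A and is invariant under the reflection
about `θ`, then `L(θ'; F) ≤ L(θ; F)` for all `θ'`, with strict inequality for `θ' ≠ θ`;
hence `θ` is the unique maximizer of `θ' ↦ L(θ'; F)`. -/
theorem statement10 (μ : Measure ℝ) (hA : CondA μ) (θ : ℝ)
    (hsym : Measure.map (fun x => 2 * θ - x) μ = μ) :
    ∀ θ' : ℝ, Ltheta θ' μ ≤ Ltheta θ μ ∧ (θ' ≠ θ → Ltheta θ' μ < Ltheta θ μ) := by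
  have := hA.1
  exact statement10_general μ ⟨by fun_prop, (hasFiniteIntegral_iff_norm _).2 hA.2.2⟩ θ hsym
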